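/- Approximation by bandlimited truncation: for f \in L^2_{q,2,v} and f_a(x) = \langle f, k_x \rangle, one has f_a \in PW_{q,a}^v and the pointwise error bound |f(x)-f_a(x)|^2 \leq \frac{c_{q,v}^2 \|j_v(\cdot,q^2)\|^2_{q,2,v}}{x^{2v+2}} \int_a^\infty |\mathcal{F}_{q,v}f(t)|^2 t^{2v+1} d_q t; hence for every \delta>0, \sup_{x\in\mathbb{R}_q^+, x>\delta} |f(x)-f_a(x)| \to 0 as a \to \infty along q^{-\mathbb{Z}}. -/

import Mathlib

noncomputable def qPoch (a q : ℝ) (n : ℕ) : ℝ := ∏ i ∈ Finset.range n, (1 - a * q ^ i)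

noncomputable def qPochInf (a q : ℝ) : ℝ := ∏' i : ℕ, (1 - a * q ^ i)

/-- Normalized Hahn–Exton q-Bessel function `j_v(z, q²)` (complex argument). -/
noncomputable def jv (v q : ℝ) (z : ℂ) : ℂ :=
  ∑' n : ℕ, (-1 : ℂ) ^ n * (q : ℂ) ^ (n * (n + 1)) * z ^ (2 * n) /
    ((qPoch (q ^ 2) (q ^ 2) n : ℝ) * (qPoch (q ^ (2 * v + 2 : ℝ)) (q ^ 2) n : ℝ) : ℝ)

/-- Normalized Hahn–Exton q-Bessel function `j_v(x, q²)` (real argument). -/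
noncomputable def jvR (v q x : ℝ) : ℝ :=
  ∑' n : ℕ, (-1 : ℝ) ^ n * q ^ (n * (n + 1)) * x ^ (2 * n) /
    (qPoch (q ^ 2) (q ^ 2) n * qPoch (q ^ (2 * v + 2 : ℝ)) (q ^ 2) n)

noncomputable def cqv (q v : ℝ) : ℝ :=
  (1 / (1 - q)) * qPochInf (q ^ (2 * v + 2 : ℝ)) (q ^ 2) / qPochInf (q ^ 2) (q ^ 2)

/-- Jackson q-integral on `[0,a]`. -/
noncomputable def qInt0 (q a : ℝ) (f : ℝ → ℝ) : ℝ :=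
  (1 - q) * a * ∑' n : ℕ, q ^ n * f (a * q ^ n)

/-- Jackson q-integral on `[0,∞)`. -/
noncomputable def qIntInf (q : ℝ) (f : ℝ → ℝ) : ℝ :=
  (1 - q) * ∑' n : ℤ, q ^ n * f (q ^ n)

/-- Complex-valued Jackson q-integral on `[0,a]`. -/
noncomputable def qIntC0 (q a : ℝ) (f : ℝ → ℂ) : ℂ :=
  ((1 - q) * a : ℝ) * ∑' n : ℕ, (q ^ n : ℝ) * f (a * q ^ n)

/-- The operator `T_a^v`. -/
noncomputable def Tav (q v a : ℝ) (u : ℝ → ℝ) (x : ℝ) : ℝ :=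
  cqv q v * qInt0 q a (fun t => u t * jvR v q (x * t) * t ^ (2 * v + 1 : ℝ))

/-- The q-Bessel Fourier transform `𝓕_{q,v}`. -/
noncomputable def Fqv (q v : ℝ) (f : ℝ → ℝ) (x : ℝ) : ℝ :=
  cqv q v * qIntInf q (fun t => f t * jvR v q (x * t) * t ^ (2 * v + 1 : ℝ))

/-- Membership in `L²_{q,v,a}` (functions on `[0,a]_q`). -/
def memL2a (q v a : ℝ) (f : ℝ → ℝ) : Prop :=
  Summable (fun n : ℕ => q ^ n * (f (a * q ^ n)) ^ 2 * (a * q ^ n) ^ (2 * v + 1 : ℝ))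

/-- Membership in `L²_{q,2,v}` (even functions on `ℝ_q`, given on `ℝ_q⁺`). -/
def memL2 (q v : ℝ) (f : ℝ → ℝ) : Prop :=
  Summable (fun n : ℤ => q ^ n * (f (q ^ n)) ^ 2 * ((q : ℝ) ^ n) ^ (2 * v + 1 : ℝ))

/-- Inner product on `L²_{q,2,v}`. -/
noncomputable def qInner (q v : ℝ) (f g : ℝ → ℝ) : ℝ :=
  qIntInf q (fun t => f t * g t * t ^ (2 * v + 1 : ℝ))

/-- The kernel `k(x,y)`. -/
noncomputable def kker (q v a x y : ℝ) : ℝ :=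
  cqv q v ^ 2 * qInt0 q a (fun t => jvR v q (x * t) * jvR v q (y * t) * t ^ (2 * v + 1 : ℝ))

/-- Tail of the Jackson integral over the points of `ℝ_q⁺` exceeding `a = q^{n₀}`. -/
noncomputable def qIntTail (q : ℝ) (n₀ : ℤ) (f : ℝ → ℝ) : ℝ :=
  (1 - q) * ∑' n : ℕ, (q : ℝ) ^ (n₀ - 1 - (n : ℤ)) * f ((q : ℝ) ^ (n₀ - 1 - (n : ℤ)))

/-- The truncation `f_a(x) = ⟨f, k_x⟩`, where `a = q^{n₀}`. -/
noncomputable def fTrunc (q v : ℝ) (n₀ : ℤ) (f : ℝ → ℝ) (x : ℝ) : ℝ :=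
  qInner q v f (kker q v ((q : ℝ) ^ n₀) x)

/-!
Sampling `x ^ (v + 1) * f x` at `x = q ^ n` identifies `L²_{q,2,v}`, up to the factor `1 - q`, with
`ℓ²(ℤ)` and turns the `q`-Bessel transform into the Hankel operator `H` with entries
`(1 - q) c_{q,v} x ^ (v + 1) j_v(x, q²)` at `x = q ^ (m + n)`. Euler's series for `(x; p)_∞` and
`1 / (x; p)_∞` factor this operator as `H = (sL; q²)_∞ (sR; q²)_∞⁻¹ J`, where `s = q ^ (v + 1)`,
`L` and `R` are the two shifts of `ℤ`, and `J` is the reflection. Since `J L = R J` and `J² = 1`,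
the factors cancel in `H²`, so `H² = 1`; and `H` is symmetric because its entries depend on `m + n`
only.

Pairing `f` with the kernel `k_x` is applying `H P H`, where `P` restricts to the points
`q ^ n ≤ a`. The error `f - f_a` is `H (1 - P) H f`, and its value at each point is bounded by its
norm, which is the norm of the tail of `H f`. The constant of the theorem enters through
`c_{q,v}² ‖j_v‖² = 1 / (1 - q)`, which is the diagonal entry `(H²)₀₀ = 1`.
-/

noncomputable section

open Filter Topology FormalMultilinearSeries
open scoped lp

section PowerSeries

variable {𝕜 A : Type*} [NontriviallyNormedField 𝕜] [NormedRing A] [NormedAlgebra 𝕜 A]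
  {b c : ℕ → 𝕜} {a s x y : A} {p : 𝕜}

theorem smul_mem_eball_zero {r : ENNReal} (hp : ‖p‖ ≤ 1) (hx : x ∈ Metric.eball 0 r) :
    p • x ∈ Metric.eball 0 r := by
  rw [Metric.mem_eball, edist_zero_right] at hx ⊢
  have hp' : ‖p‖ₑ ≤ 1 := by simpa [← ofReal_norm] using hp
  exact (enorm_smul_le.trans (mul_le_of_le_one_left' hp')).trans_lt hx

variable [CompleteSpace A]

theorem tendsto_ofScalarsSum_pow_smul (hp : ‖p‖ < 1) (hc : 0 < (ofScalars A c).radius) (x : A) :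
    Tendsto (fun n : ℕ ↦ ofScalarsSum c (p ^ n • x)) atTop (𝓝 (c 0 • 1)) := by
  have hcont : ContinuousAt (ofScalarsSum c) (0 : A) :=
    ((ofScalars A c).hasFPowerSeriesOnBall hc).analyticAt.continuousAt
  have hpow := (tendsto_pow_atTop_nhds_zero_of_norm_lt_one hp).smul_const x
  rw [zero_smul] at hpow
  simpa only [ofScalarsSum_zero, Function.comp_def] using hcont.tendsto.comp hpow

theorem hasSum_ofScalarsSum (hx : x ∈ Metric.eball 0 (ofScalars A c).radius) :
    HasSum (fun n ↦ c n • x ^ n) (ofScalarsSum c x) := by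
  simp_rw [← ofScalars_apply_eq]
  exact (ofScalars A c).hasSum hx

theorem semiconjBy_ofScalarsSum (h : SemiconjBy a x y)
    (hx : x ∈ Metric.eball 0 (ofScalars A c).radius)
    (hy : y ∈ Metric.eball 0 (ofScalars A c).radius) :
    SemiconjBy a (ofScalarsSum c x) (ofScalarsSum c y) := by
  simp only [ofScalars_sum_eq]
  exact SemiconjBy.tsum_right a (hasSum_ofScalarsSum hx).summable (hasSum_ofScalarsSum hy).summable
    fun n ↦ (h.pow_right n).smul_right (c n)

theorem ofScalarsSum_sub_ofScalarsSum_smul (hp : ‖p‖ ≤ 1)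
    (hx : x ∈ Metric.eball 0 (ofScalars A c).radius) (hb : HasSum (fun n ↦ b n • x ^ n) s)
    (hbc : ∀ n, (1 - p ^ (n + 1)) * c (n + 1) = b n) :
    ofScalarsSum c x - ofScalarsSum c (p • x) = x * s := by
  have hsub := (hasSum_ofScalarsSum hx).sub (hasSum_ofScalarsSum (smul_mem_eball_zero hp hx))
  have hterm (n : ℕ) :
      c (n + 1) • x ^ (n + 1) - c (n + 1) • (p • x) ^ (n + 1) = x * b n • x ^ n := by
    rw [← hbc, smul_pow, smul_smul, ← sub_smul, mul_smul_comm, ← pow_succ']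
    ring_nf
  rw [← hsub.tsum_eq, hsub.summable.tsum_eq_zero_add]
  simp only [hterm, pow_zero, sub_self, zero_add, (hb.mul_left x).tsum_eq]

end PowerSeries

section Euler

variable {p : ℝ}

theorem qPoch_zero (a p : ℝ) : qPoch a p 0 = 1 := Finset.prod_range_zero _

theorem qPoch_succ (a p : ℝ) (n : ℕ) : qPoch a p (n + 1) = qPoch a p n * (1 - a * p ^ n) :=
  Finset.prod_range_succ _ _

theorem one_sub_mul_pow_ne_zero {a : ℝ} (ha : |a| < 1) (hp : |p| < 1) (n : ℕ) :
    1 - a * p ^ n ≠ 0 := by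
  have h : |a * p ^ n| < 1 := by
    rw [abs_mul, abs_pow]
    exact mul_lt_one_of_nonneg_of_lt_one_left (abs_nonneg a) ha
      (pow_le_one₀ (abs_nonneg p) hp.le)
  exact (sub_pos.2 (lt_of_abs_lt h)).ne'

theorem qPoch_ne_zero {a : ℝ} (ha : |a| < 1) (hp : |p| < 1) (n : ℕ) : qPoch a p n ≠ 0 :=
  Finset.prod_ne_zero_iff.2 fun i _ ↦ one_sub_mul_pow_ne_zero ha hp i

theorem one_sub_pow_succ_ne_zero (hp : |p| < 1) (n : ℕ) : 1 - p ^ (n + 1) ≠ 0 := by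
  simpa only [pow_succ'] using one_sub_mul_pow_ne_zero hp hp n

theorem tendsto_one_sub_pow_succ (hp : |p| < 1) :
    Tendsto (fun n : ℕ ↦ 1 - p ^ (n + 1)) atTop (𝓝 1) := by
  simpa using ((tendsto_add_atTop_iff_nat 1).2
    (tendsto_pow_atTop_nhds_zero_of_abs_lt_one hp)).const_sub 1

/-- The coefficients of Euler's series `(x; p)_∞ = ∑ eulerCoeff p n * x ^ n`. -/
def eulerCoeff (p : ℝ) (n : ℕ) : ℝ := (-1) ^ n * p ^ n.choose 2 / qPoch p p n

/-- The coefficients of Euler's series `1 / (x; p)_∞ = ∑ invEulerCoeff p n * x ^ n`. -/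
def invEulerCoeff (p : ℝ) (n : ℕ) : ℝ := (qPoch p p n)⁻¹

theorem eulerCoeff_zero (p : ℝ) : eulerCoeff p 0 = 1 := by simp [eulerCoeff, qPoch_zero]

theorem invEulerCoeff_zero (p : ℝ) : invEulerCoeff p 0 = 1 := by simp [invEulerCoeff, qPoch_zero]

theorem eulerCoeff_succ (p : ℝ) (n : ℕ) :
    eulerCoeff p (n + 1) = -(p ^ n / (1 - p ^ (n + 1))) * eulerCoeff p n := by
  rw [eulerCoeff, eulerCoeff, qPoch_succ, ← pow_succ', Nat.choose_succ_succ', Nat.choose_one_right,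
    pow_add, pow_succ, mul_comm (qPoch p p n)]
  simp only [div_eq_mul_inv, mul_inv]
  ring

theorem invEulerCoeff_succ (p : ℝ) (n : ℕ) :
    invEulerCoeff p (n + 1) = (1 - p ^ (n + 1))⁻¹ * invEulerCoeff p n := by
  rw [invEulerCoeff, invEulerCoeff, qPoch_succ, ← pow_succ', mul_inv_rev]

variable {A : Type*} [NormedRing A] [NormedAlgebra ℝ A]

theorem radius_eulerCoeff (hp0 : p ≠ 0) (hp : |p| < 1) :
    (ofScalars A (eulerCoeff p)).radius = ⊤ := by
  have hne (n : ℕ) : eulerCoeff p n ≠ 0 := by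
    simp [eulerCoeff, hp0, qPoch_ne_zero hp hp]
  refine ofScalars_radius_eq_top_of_tendsto A _ (.of_forall hne) ?_
  simp_rw [Nat.succ_eq_add_one, eulerCoeff_succ, ← norm_div, mul_div_cancel_right₀ _ (hne _)]
  simpa using ((tendsto_pow_atTop_nhds_zero_of_abs_lt_one hp).div
    (tendsto_one_sub_pow_succ hp) one_ne_zero).neg.norm

theorem one_le_radius_invEulerCoeff (hp : |p| < 1) :
    1 ≤ (ofScalars A (invEulerCoeff p)).radius := by
  have hne (n : ℕ) : invEulerCoeff p n ≠ 0 := inv_ne_zero (qPoch_ne_zero hp hp n)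
  suffices Tendsto (fun n ↦ ‖invEulerCoeff p n.succ‖ / ‖invEulerCoeff p n‖) atTop
      (𝓝 (1 : NNReal)) by
    simpa using inv_le_ofScalars_radius_of_tendsto A _ one_ne_zero this
  simp_rw [Nat.succ_eq_add_one, invEulerCoeff_succ, ← norm_div, mul_div_cancel_right₀ _ (hne _)]
  simpa using ((tendsto_one_sub_pow_succ hp).inv₀ one_ne_zero).norm

/-- The `p`-shifted factorial `(x; p)_∞` of an element of a Banach algebra, by its Euler series. -/
def eulerSum (p : ℝ) (x : A) : A := ofScalarsSum (eulerCoeff p) x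

/-- The inverse of `(x; p)_∞`, by its Euler series; meaningful for `‖x‖ < 1`. -/
def invEulerSum (p : ℝ) (x : A) : A := ofScalarsSum (invEulerCoeff p) x

variable {a x y : A}

theorem mem_eball_radius_eulerCoeff (hp0 : p ≠ 0) (hp : |p| < 1) (x : A) :
    x ∈ Metric.eball 0 (ofScalars A (eulerCoeff p)).radius := by
  rw [radius_eulerCoeff hp0 hp]
  exact edist_lt_top x 0

theorem mem_eball_radius_invEulerCoeff (hp : |p| < 1) (hx : ‖x‖ < 1) :
    x ∈ Metric.eball 0 (ofScalars A (invEulerCoeff p)).radius := by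
  refine Metric.eball_subset_eball (one_le_radius_invEulerCoeff hp) ?_
  simpa [← ofReal_norm] using hx

variable [CompleteSpace A]

theorem hasSum_eulerSum (hp0 : p ≠ 0) (hp : |p| < 1) (x : A) :
    HasSum (fun n ↦ eulerCoeff p n • x ^ n) (eulerSum p x) :=
  hasSum_ofScalarsSum (mem_eball_radius_eulerCoeff hp0 hp x)

theorem hasSum_invEulerSum (hp : |p| < 1) (hx : ‖x‖ < 1) :
    HasSum (fun n ↦ invEulerCoeff p n • x ^ n) (invEulerSum p x) :=
  hasSum_ofScalarsSum (mem_eball_radius_invEulerCoeff hp hx)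

theorem eulerSum_eq_one_sub_mul (hp0 : p ≠ 0) (hp : |p| < 1) (x : A) :
    eulerSum p x = (1 - x) * eulerSum p (p • x) := by
  have hneg : HasSum (fun n ↦ (-(p ^ n * eulerCoeff p n)) • x ^ n) (-eulerSum p (p • x)) := by
    refine (hasSum_eulerSum hp0 hp (p • x)).neg.congr_fun fun n ↦ ?_
    rw [smul_pow, smul_smul, neg_smul, mul_comm]
  have hsub := ofScalarsSum_sub_ofScalarsSum_smul hp.le (mem_eball_radius_eulerCoeff hp0 hp x)
    hneg fun n ↦ by
      rw [eulerCoeff_succ]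
      field_simp [one_sub_pow_succ_ne_zero hp n]
  rw [mul_neg] at hsub
  rw [sub_mul, one_mul, sub_eq_add_neg]
  exact sub_eq_iff_eq_add'.1 hsub

theorem invEulerSum_smul (hp : |p| < 1) (hx : ‖x‖ < 1) :
    invEulerSum p (p • x) = (1 - x) * invEulerSum p x := by
  have hsub := ofScalarsSum_sub_ofScalarsSum_smul hp.le (mem_eball_radius_invEulerCoeff hp hx)
    (hasSum_invEulerSum hp hx) fun n ↦ by
      rw [invEulerCoeff_succ, mul_inv_cancel_left₀ (one_sub_pow_succ_ne_zero hp n)]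
  rw [sub_mul, one_mul]
  exact eq_sub_of_add_eq (sub_eq_iff_eq_add'.1 hsub).symm

theorem tendsto_eulerSum_pow_smul (hp0 : p ≠ 0) (hp : |p| < 1) (x : A) :
    Tendsto (fun n : ℕ ↦ eulerSum p (p ^ n • x)) atTop (𝓝 1) := by
  have hpos : 0 < (ofScalars A (eulerCoeff p)).radius := by simp [radius_eulerCoeff hp0 hp]
  simpa only [eulerSum, eulerCoeff_zero, one_smul] using tendsto_ofScalarsSum_pow_smul hp hpos x

theorem tendsto_invEulerSum_pow_smul (hp : |p| < 1) (x : A) :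
    Tendsto (fun n : ℕ ↦ invEulerSum p (p ^ n • x)) atTop (𝓝 1) := by
  have hpos := one_pos.trans_le (one_le_radius_invEulerCoeff (A := A) hp)
  simpa only [invEulerSum, invEulerCoeff_zero, one_smul] using
    tendsto_ofScalarsSum_pow_smul hp hpos x

theorem semiconjBy_eulerSum (hp0 : p ≠ 0) (hp : |p| < 1) (h : SemiconjBy a x y) :
    SemiconjBy a (eulerSum p x) (eulerSum p y) :=
  semiconjBy_ofScalarsSum h (mem_eball_radius_eulerCoeff hp0 hp x)
    (mem_eball_radius_eulerCoeff hp0 hp y)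

theorem semiconjBy_invEulerSum (hp : |p| < 1) (h : SemiconjBy a x y) (hx : ‖x‖ < 1)
    (hy : ‖y‖ < 1) : SemiconjBy a (invEulerSum p x) (invEulerSum p y) :=
  semiconjBy_ofScalarsSum h (mem_eball_radius_invEulerCoeff hp hx)
    (mem_eball_radius_invEulerCoeff hp hy)

-- Both functional equations introduce the factor `1 - x`, so the product is invariant under
-- `x ↦ p • x` and equals its value at `0`.
theorem invEulerSum_mul_eulerSum (hp0 : p ≠ 0) (hp : |p| < 1) (hx : ‖x‖ < 1) :
    invEulerSum p x * eulerSum p x = 1 := by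
  have hpow (n : ℕ) : ‖p ^ n • x‖ < 1 := by
    rw [norm_smul, norm_pow]
    exact mul_lt_one_of_nonneg_of_lt_one_right (pow_le_one₀ (norm_nonneg p) hp.le)
      (norm_nonneg x) hx
  have hcomm (n : ℕ) : Commute (1 - p ^ n • x) (invEulerSum p (p ^ n • x)) :=
    semiconjBy_invEulerSum hp ((Commute.one_left _).sub_left (.refl _)) (hpow n) (hpow n)
  have hinv (n : ℕ) :
      invEulerSum p (p ^ n • x) * eulerSum p (p ^ n • x) = invEulerSum p x * eulerSum p x := by
    induction n with
    | zero => rw [pow_zero, one_smul]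
    | succ n ih =>
      rw [pow_succ', mul_smul, invEulerSum_smul hp (hpow n), (hcomm n).eq, mul_assoc,
        ← eulerSum_eq_one_sub_mul hp0 hp, ih]
  have hlim := (tendsto_invEulerSum_pow_smul hp x).mul (tendsto_eulerSum_pow_smul hp0 hp x)
  simp only [hinv, one_mul] at hlim
  exact tendsto_nhds_unique tendsto_const_nhds hlim

theorem eulerSum_mul_invEulerSum (hp0 : p ≠ 0) (hp : |p| < 1) (hx : ‖x‖ < 1) :
    eulerSum p x * invEulerSum p x = 1 := by
  have hcomm : Commute (eulerSum p x) (invEulerSum p x) :=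
    semiconjBy_invEulerSum hp (semiconjBy_eulerSum hp0 hp (Commute.refl x)).symm hx hx
  rw [hcomm.eq, invEulerSum_mul_eulerSum hp0 hp hx]

theorem eulerSum_mul_invEulerSum_mul_mul_self {j : A} (hp0 : p ≠ 0) (hp : |p| < 1)
    (hj : j * j = 1) (h : SemiconjBy j x y) (hx : ‖x‖ < 1) (hy : ‖y‖ < 1) :
    eulerSum p x * invEulerSum p y * j * (eulerSum p x * invEulerSum p y * j) = 1 := by
  have h' : SemiconjBy j y x := by
    calc j * y = j * (y * j) * j := by rw [mul_assoc, mul_assoc, hj, mul_one]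
      _ = x * j := by rw [← h.eq, ← mul_assoc, hj, one_mul]
  calc eulerSum p x * invEulerSum p y * j * (eulerSum p x * invEulerSum p y * j)
    _ = eulerSum p x * invEulerSum p y * (j * eulerSum p x) * invEulerSum p y * j := by
      simp only [mul_assoc]
    _ = eulerSum p x * (invEulerSum p y * eulerSum p y) * (j * invEulerSum p y) * j := by
      rw [(semiconjBy_eulerSum hp0 hp h).eq]
      simp only [mul_assoc]
    _ = eulerSum p x * invEulerSum p x * (j * j) := by
      rw [invEulerSum_mul_eulerSum hp0 hp hy, (semiconjBy_invEulerSum hp h' hy hx).eq]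
      simp only [mul_assoc, one_mul]
    _ = 1 := by rw [eulerSum_mul_invEulerSum hp0 hp hx, hj, mul_one]

end Euler

section QPochhammer

variable {p : ℝ}

theorem eulerSum_eq_qPoch_mul (hp0 : p ≠ 0) (hp : |p| < 1) (x : ℝ) (n : ℕ) :
    eulerSum p x = qPoch x p n * eulerSum p (p ^ n • x) := by
  induction n with
  | zero => rw [qPoch_zero, pow_zero, one_smul, one_mul]
  | succ n ih =>
    rw [ih, eulerSum_eq_one_sub_mul hp0 hp, qPoch_succ, pow_succ', mul_smul, smul_eq_mul,
      smul_eq_mul, mul_assoc, mul_comm x]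

theorem tendsto_qPoch (hp : |p| < 1) (x : ℝ) :
    Tendsto (qPoch x p) atTop (𝓝 (qPochInf x p)) := by
  have hsum : Summable fun i : ℕ ↦ -(x * p ^ i) :=
    ((summable_geometric_of_abs_lt_one hp).mul_left x).neg
  have hprod := (Real.multipliable_one_add_of_summable hsum).hasProd.tendsto_prod_nat
  simp only [← sub_eq_add_neg] at hprod
  exact hprod

theorem qPochInf_eq_eulerSum (hp0 : p ≠ 0) (hp : |p| < 1) (x : ℝ) :
    qPochInf x p = eulerSum p x := by
  have hlim := (tendsto_qPoch hp x).mul (tendsto_eulerSum_pow_smul hp0 hp x)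
  simp only [← eulerSum_eq_qPoch_mul hp0 hp, mul_one] at hlim
  exact tendsto_nhds_unique hlim tendsto_const_nhds

theorem hasSum_qPochInf (hp0 : p ≠ 0) (hp : |p| < 1) (x : ℝ) :
    HasSum (fun n ↦ eulerCoeff p n * x ^ n) (qPochInf x p) := by
  rw [qPochInf_eq_eulerSum hp0 hp]
  exact hasSum_eulerSum hp0 hp x

theorem qPochInf_eq_qPoch_mul (hp0 : p ≠ 0) (hp : |p| < 1) (x : ℝ) (n : ℕ) :
    qPochInf x p = qPoch x p n * qPochInf (x * p ^ n) p := by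
  rw [qPochInf_eq_eulerSum hp0 hp, qPochInf_eq_eulerSum hp0 hp, eulerSum_eq_qPoch_mul hp0 hp x n,
    smul_eq_mul, mul_comm x]

theorem qPochInf_ne_zero {x : ℝ} (hp0 : p ≠ 0) (hp : |p| < 1) (hx : |x| < 1) :
    qPochInf x p ≠ 0 := by
  rw [qPochInf_eq_eulerSum hp0 hp]
  exact left_ne_zero_of_mul_eq_one (eulerSum_mul_invEulerSum hp0 hp hx)

theorem qPochInf_pow_succ (hp0 : p ≠ 0) (hp : |p| < 1) (n : ℕ) :
    qPochInf (p ^ (n + 1)) p = invEulerCoeff p n * qPochInf p p := by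
  rw [qPochInf_eq_qPoch_mul hp0 hp p n, invEulerCoeff, inv_mul_cancel_left₀ (qPoch_ne_zero hp hp n),
    pow_succ']

theorem qPochInf_zpow_eq_zero (hp0 : p ≠ 0) (hp : |p| < 1) {k : ℤ} (hk : k ≤ 0) :
    qPochInf (p ^ k) p = 0 := by
  obtain ⟨n, rfl⟩ := Int.exists_eq_neg_ofNat hk
  rw [qPochInf_eq_qPoch_mul hp0 hp _ (n + 1), qPoch_succ, zpow_neg, zpow_natCast,
    inv_mul_cancel₀ (pow_ne_zero n hp0), sub_self, mul_zero, zero_mul]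

theorem summable_eulerCoeff_mul_eulerCoeff (hp0 : p ≠ 0) (hp : |p| < 1) (x y : ℝ) :
    Summable fun i : ℕ × ℕ ↦
      eulerCoeff p i.1 * x ^ i.1 * (eulerCoeff p i.2 * (y * p ^ i.1) ^ i.2) := by
  have hprod := (hasSum_qPochInf hp0 hp x).summable.abs.mul_of_nonneg
    (hasSum_qPochInf hp0 hp y).summable.abs (fun _ ↦ abs_nonneg _) (fun _ ↦ abs_nonneg _)
  refine hprod.of_norm_bounded fun ⟨i, j⟩ ↦ ?_
  have hpow : |(p ^ i) ^ j| ≤ 1 := by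
    rw [abs_pow, abs_pow]
    exact pow_le_one₀ (by positivity) (pow_le_one₀ (abs_nonneg p) hp.le)
  rw [Real.norm_eq_abs, mul_pow, ← mul_assoc (eulerCoeff p j), ← mul_assoc, abs_mul _ (_ ^ j),
    abs_mul (eulerCoeff p i * x ^ i)]
  exact mul_le_of_le_one_right (by positivity) hpow

theorem tsum_eulerCoeff_mul_qPochInf_comm (hp0 : p ≠ 0) (hp : |p| < 1) (x y : ℝ) :
    ∑' n, eulerCoeff p n * x ^ n * qPochInf (y * p ^ n) p =
      ∑' n, eulerCoeff p n * y ^ n * qPochInf (x * p ^ n) p := by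
  simp only [← (hasSum_qPochInf hp0 hp _).tsum_eq, ← tsum_mul_left]
  refine (summable_eulerCoeff_mul_eulerCoeff hp0 hp x y).prod_symm.tsum_comm.trans ?_
  refine tsum_congr fun j ↦ tsum_congr fun i ↦ ?_
  simp only [mul_pow, ← pow_mul, mul_comm i j]
  ring

theorem qPochInf_mul_tsum_eulerCoeff_div_qPoch {b : ℝ} (hp0 : p ≠ 0) (hp : |p| < 1)
    (hb : ∀ n, qPoch b p n ≠ 0) (x : ℝ) :
    qPochInf b p * ∑' n, eulerCoeff p n * x ^ n / qPoch b p n =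
      ∑' n, eulerCoeff p n * b ^ n * qPochInf (x * p ^ n) p := by
  rw [← tsum_eulerCoeff_mul_qPochInf_comm hp0 hp, ← tsum_mul_left]
  refine tsum_congr fun n ↦ ?_
  rw [qPochInf_eq_qPoch_mul hp0 hp b n]
  field_simp [hb n]

theorem jvR_eq_tsum_eulerCoeff (v q x : ℝ) :
    jvR v q x = ∑' n, eulerCoeff (q ^ 2) n * (q ^ 2 * x ^ 2) ^ n /
      qPoch (q ^ (2 * v + 2)) (q ^ 2) n := by
  refine tsum_congr fun n ↦ ?_
  have hexp : n * (n + 1) = 2 * n.choose 2 + 2 * n := by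
    rw [Nat.choose_two_right, Nat.mul_div_cancel' (Nat.even_mul_pred_self n).two_dvd]
    cases n <;> grind
  rw [eulerCoeff, hexp, pow_add, pow_mul, pow_mul, pow_mul, mul_pow, ← div_div]
  ring

end QPochhammer

section LpOperators

variable {ι E : Type*} [NormedAddCommGroup E] {p : ENNReal}

theorem memℓp_comp_equiv {g : ι → E} (hg : Memℓp g p) (σ : ι ≃ ι) : Memℓp (fun i ↦ g (σ i)) p := by
  rcases p.trichotomy with rfl | rfl | hp
  · exact memℓp_zero (hg.finite_dsupport.preimage σ.injective.injOn)
  · refine memℓp_infty (hg.bddAbove.mono ?_)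
    exact Set.range_comp_subset_range σ fun i ↦ ‖g i‖
  · exact memℓp_gen (σ.summable_iff.2 (hg.summable hp))

variable [Fact (1 ≤ p)] (𝕜 : Type*) [NontriviallyNormedField 𝕜] [NormedSpace 𝕜 E]

/-- The isometry of `ℓ^p(ι, E)` permuting the coordinates by `σ`, so that the standard vector
at `i` goes to the one at `σ i`. -/
def lpPermuteIsometry (σ : Equiv.Perm ι) : ℓ^p(ι, E) →ₗᵢ[𝕜] ℓ^p(ι, E) where
  toFun g := ⟨fun i ↦ g (σ⁻¹ i), memℓp_comp_equiv (lp.memℓp g) σ⁻¹⟩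
  map_add' _ _ := rfl
  map_smul' _ _ := rfl
  norm_map' g := by
    rcases p.dichotomy with rfl | hp
    · exact (σ⁻¹).iSup_comp (g := fun i ↦ ‖g i‖)
    · rw [lp.norm_eq_tsum_rpow (by positivity), lp.norm_eq_tsum_rpow (by positivity)]
      exact congr_arg (· ^ _) ((σ⁻¹).tsum_eq fun i ↦ ‖g i‖ ^ p.toReal)

/-- The action of the permutations of `ι` on `ℓ^p(ι, E)` by bounded operators. -/
def lpPermute : Equiv.Perm ι →* (ℓ^p(ι, E) →L[𝕜] ℓ^p(ι, E)) where
  toFun σ := (lpPermuteIsometry 𝕜 σ).toContinuousLinearMap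
  map_one' := ContinuousLinearMap.ext fun _ ↦ rfl
  map_mul' _ _ := ContinuousLinearMap.ext fun _ ↦ rfl

variable {𝕜}

theorem lpPermute_apply (σ : Equiv.Perm ι) (g : ℓ^p(ι, E)) (i : ι) :
    lpPermute 𝕜 σ g i = g (σ⁻¹ i) := rfl

theorem norm_lpPermute_le (σ : Equiv.Perm ι) :
    ‖(lpPermute 𝕜 σ : ℓ^p(ι, E) →L[𝕜] ℓ^p(ι, E))‖ ≤ 1 :=
  ContinuousLinearMap.opNorm_le_bound _ zero_le_one fun g ↦ by
    rw [one_mul]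
    exact ((lpPermuteIsometry 𝕜 σ).norm_map g).le

variable (𝕜) in
/-- The coordinate projection of `ℓ^p(ι, E)` which keeps the coordinates in `s`. -/
def lpIndicator (s : Set ι) : ℓ^p(ι, E) →L[𝕜] ℓ^p(ι, E) :=
  LinearMap.mkContinuous
    { toFun g := ⟨s.indicator g, (lp.memℓp g).mono' fun _ ↦ norm_indicator_le_norm_self _ _⟩
      map_add' g h := lp.ext (s.indicator_add g h)
      map_smul' c g := lp.ext (s.indicator_const_smul c g) }
    1 fun g ↦ by
      rw [one_mul]
      exact lp.norm_mono (zero_lt_one.trans_le Fact.out).ne' fun _ ↦ norm_indicator_le_norm_self _ _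

theorem coe_lpIndicator (s : Set ι) (g : ℓ^p(ι, E)) : ⇑(lpIndicator 𝕜 s g) = s.indicator g := rfl

theorem sub_lpIndicator (s : Set ι) (g : ℓ^p(ι, E)) :
    g - lpIndicator 𝕜 s g = lpIndicator 𝕜 sᶜ g :=
  lp.ext (s.indicator_compl g).symm

theorem hasSum_ofScalars_lpPermute {c : ℕ → 𝕜} {s : 𝕜} {σ : Equiv.Perm ι}
    {S : ℓ^p(ι, E) →L[𝕜] ℓ^p(ι, E)} (hS : HasSum (fun n ↦ c n • (s • lpPermute 𝕜 σ) ^ n) S)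
    (g : ℓ^p(ι, E)) (i : ι) :
    HasSum (fun n ↦ (c n * s ^ n) • g ((σ ^ n)⁻¹ i)) (S g i) := by
  have hi := (hS.mapL (ContinuousLinearMap.apply 𝕜 _ g)).mapL (lp.evalCLM 𝕜 (fun _ ↦ E) p i)
  refine hi.congr_fun fun n ↦ ?_
  rw [smul_pow, ← map_pow, mul_smul]
  rfl

end LpOperators

section L2

open scoped ComplexConjugate

variable {ι 𝕜 : Type*} [RCLike 𝕜]

theorem adjoint_lpIndicator (s : Set ι) :
    ContinuousLinearMap.adjoint (lpIndicator 𝕜 s : ℓ²(ι, 𝕜) →L[𝕜] ℓ²(ι, 𝕜)) = lpIndicator 𝕜 s := by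
  refine ((ContinuousLinearMap.eq_adjoint_iff _ _).2 fun g h ↦ ?_).symm
  rw [lp.inner_eq_tsum, lp.inner_eq_tsum]
  refine tsum_congr fun i ↦ ?_
  by_cases hi : i ∈ s <;> simp [coe_lpIndicator, hi]

variable [DecidableEq ι]

theorem lp_apply_eq_inner (g : ℓ²(ι, 𝕜)) (i : ι) : g i = inner 𝕜 (lp.single 2 i 1) g := by
  simp [lp.inner_single_left]

theorem adjoint_eq_self_of_conj_apply_single {T : ℓ²(ι, 𝕜) →L[𝕜] ℓ²(ι, 𝕜)}
    (h : ∀ i j, conj (T (lp.single 2 i 1) j) = T (lp.single 2 j 1) i) :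
    ContinuousLinearMap.adjoint T = T := by
  refine lp.ext_continuousLinearMap ENNReal.ofNat_ne_top fun i ↦
    ContinuousLinearMap.ext_ring (lp.ext (funext fun j ↦ ?_))
  change ContinuousLinearMap.adjoint T (lp.single 2 i 1) j = T (lp.single 2 i 1) j
  rw [lp_apply_eq_inner, ContinuousLinearMap.adjoint_inner_right, ← inner_conj_symm,
    ← lp_apply_eq_inner, h]

end L2

section EulerHankel

variable {p s : ℝ}

/-- The shift of `ℓ²(ℤ)` by `k`, which maps the standard vector at `n` to the one at `n + k`. -/
def l2Shift (k : ℤ) : ℓ²(ℤ, ℝ) →L[ℝ] ℓ²(ℤ, ℝ) := lpPermute ℝ (Equiv.addRight k)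

/-- The reflection of `ℓ²(ℤ)`, which maps the standard vector at `n` to the one at `-n`. -/
def l2Reflect : ℓ²(ℤ, ℝ) →L[ℝ] ℓ²(ℤ, ℝ) := lpPermute ℝ (Equiv.neg ℤ)

/-- The operator on `ℓ²(ℤ)` with the Hankel matrix `(s ^ (m + n) / (p; p)_∞ * w (m + n))`, where
`w k = ∑ j, eulerCoeff p j * s ^ (2 * j) * (p ^ (k + j + 1); p)_∞`, in the factored form
`(s L; p)_∞ (s R; p)_∞⁻¹ J` where `L` and `R` are the shifts of `ℤ` and `J` is its reflection. -/
def eulerHankel (p s : ℝ) : ℓ²(ℤ, ℝ) →L[ℝ] ℓ²(ℤ, ℝ) :=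
  eulerSum p (s • l2Shift (-1)) * invEulerSum p (s • l2Shift 1) * l2Reflect

theorem norm_smul_l2Shift_lt_one (hs : |s| < 1) (k : ℤ) : ‖s • l2Shift k‖ < 1 := by
  rw [norm_smul]
  exact mul_lt_one_of_nonneg_of_lt_one_left (norm_nonneg s) hs (norm_lpPermute_le _)

theorem hasSum_ofScalars_l2Shift {c : ℕ → ℝ} {k : ℤ} {S : ℓ²(ℤ, ℝ) →L[ℝ] ℓ²(ℤ, ℝ)}
    (hS : HasSum (fun n ↦ c n • (s • l2Shift k) ^ n) S) (g : ℓ²(ℤ, ℝ)) (i : ℤ) :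
    HasSum (fun n ↦ c n * s ^ n * g (i - n * k)) (S g i) := by
  refine (hasSum_ofScalars_lpPermute hS g i).congr_fun fun n ↦ ?_
  rw [Equiv.nsmul_addRight, Equiv.neg_addRight, Equiv.coe_addRight, nsmul_eq_mul, smul_eq_mul,
    sub_eq_add_neg]

theorem l2Reflect_single (n : ℤ) : l2Reflect (lp.single 2 n 1) = lp.single 2 (-n) 1 := by
  ext i
  simp [l2Reflect, lpPermute_apply, Pi.single_apply, neg_eq_iff_eq_neg]

theorem semiconjBy_l2Reflect_l2Shift (k : ℤ) :
    SemiconjBy l2Reflect (l2Shift k) (l2Shift (-k)) := by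
  have h : SemiconjBy (Equiv.neg ℤ) (Equiv.addRight k) (Equiv.addRight (-k)) :=
    Equiv.ext fun i ↦ neg_add i k
  exact h.map (lpPermute ℝ)

theorem l2Reflect_mul_self : l2Reflect * l2Reflect = 1 := by
  have h : Equiv.neg ℤ * Equiv.neg ℤ = 1 := Equiv.ext neg_neg
  rw [l2Reflect, ← map_mul, h, map_one]

theorem eulerHankel_mul_self (hp0 : p ≠ 0) (hp : |p| < 1) (hs : |s| < 1) :
    eulerHankel p s * eulerHankel p s = 1 :=
  eulerSum_mul_invEulerSum_mul_mul_self hp0 hp l2Reflect_mul_self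
    ((semiconjBy_l2Reflect_l2Shift (-1)).smul_right s) (norm_smul_l2Shift_lt_one hs _)
    (norm_smul_l2Shift_lt_one hs _)

theorem invEulerSum_l2Shift_single_apply (hp0 : p ≠ 0) (hp : |p| < 1) (hs : |s| < 1) (n r : ℤ) :
    invEulerSum p (s • l2Shift 1) (lp.single 2 (-n) 1) r =
      s ^ (r + n) * qPochInf (p ^ (r + n + 1)) p / qPochInf p p := by
  have hsum := hasSum_ofScalars_l2Shift
    (hasSum_invEulerSum hp (norm_smul_l2Shift_lt_one hs 1)) (lp.single 2 (-n) 1) r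
  have hterm (i : ℕ) (hi : (i : ℤ) ≠ r + n) :
      invEulerCoeff p i * s ^ i * (lp.single 2 (-n) 1 : ℓ²(ℤ, ℝ)) (r - i * 1) = 0 := by
    rw [lp.single_apply_ne _ _ _ (by lia), mul_zero]
  refine hsum.unique ?_
  rcases lt_or_ge (r + n) 0 with hneg | hnonneg
  · rw [qPochInf_zpow_eq_zero hp0 hp (by lia), mul_zero, zero_div]
    exact hasSum_zero.congr_fun fun i ↦ hterm i (by lia)
  · obtain ⟨k, hk⟩ := Int.eq_ofNat_of_zero_le hnonneg
    have hpow : qPochInf (p ^ (k + 1 : ℤ)) p = invEulerCoeff p k * qPochInf p p := by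
      exact_mod_cast qPochInf_pow_succ hp0 hp k
    convert hasSum_single k fun i hi ↦ hterm i (by lia) using 1
    rw [hk, hpow, zpow_natCast, show r - k * 1 = -n by lia, lp.single_apply_self]
    field_simp [qPochInf_ne_zero hp0 hp hp]

theorem eulerHankel_single_apply (hp0 : p ≠ 0) (hp : |p| < 1) (hs0 : s ≠ 0) (hs : |s| < 1)
    (n m : ℤ) :
    eulerHankel p s (lp.single 2 n 1) m = s ^ (m + n) / qPochInf p p *
      ∑' j, eulerCoeff p j * (s ^ 2) ^ j * qPochInf (p ^ (m + n + 1) * p ^ j) p := by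
  have hsum := hasSum_ofScalars_l2Shift (hasSum_eulerSum hp0 hp (s • l2Shift (-1)))
    (invEulerSum p (s • l2Shift 1) (lp.single 2 (-n) 1)) m
  rw [eulerHankel, mul_apply_eq_comp, mul_apply_eq_comp, l2Reflect_single,
    ← hsum.tsum_eq, ← tsum_mul_left]
  refine tsum_congr fun j ↦ ?_
  have hj : m - j * (-1) + n = m + n + j := by ring
  rw [invEulerSum_l2Shift_single_apply hp0 hp hs, hj, zpow_add₀ hs0, zpow_natCast,
    add_right_comm, zpow_add₀ hp0 _ j, zpow_natCast]
  ring

end EulerHankel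

section WeightedSequences

variable {q v : ℝ}

theorem rpow_two_mul_add_two {x : ℝ} (hx : 0 ≤ x) (v : ℝ) :
    x ^ (2 * v + 2) = (x ^ (v + 1)) ^ 2 := by
  rw [← Real.rpow_mul_natCast hx]
  push_cast
  ring_nf

/-- The sequence `x ^ (v + 1) * f x` of samples at `x = q ^ n`, which turns the Jackson integral of
`f * g * t ^ (2 * v + 1)` into a sum of products and `L²_{q,2,v}` into `ℓ²(ℤ)`. -/
def weightedSeq (q v : ℝ) (f : ℝ → ℝ) (n : ℤ) : ℝ := (q ^ n) ^ (v + 1) * f (q ^ n)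

theorem weightedSeq_sub (q v : ℝ) (f g : ℝ → ℝ) :
    weightedSeq q v (f - g) = weightedSeq q v f - weightedSeq q v g :=
  funext fun _ ↦ mul_sub _ _ _

theorem zpow_mul_mul_rpow_eq_weightedSeq_mul (hq0 : 0 < q) (f g : ℝ → ℝ) (n : ℤ) :
    q ^ n * (f (q ^ n) * g (q ^ n) * (q ^ n) ^ (2 * v + 1)) =
      weightedSeq q v f n * weightedSeq q v g n := by
  have hn : 0 < q ^ n := zpow_pos hq0 n
  have hpow : q ^ n * (q ^ n) ^ (2 * v + 1) = (q ^ n) ^ (v + 1) * (q ^ n) ^ (v + 1) := by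
    rw [mul_comm, ← Real.rpow_add_one hn.ne', ← Real.rpow_add hn]
    ring_nf
  rw [weightedSeq, weightedSeq, mul_left_comm, hpow]
  ring

theorem rpow_mul_weightedSeq_comp_mul (hq0 : 0 < q) (f : ℝ → ℝ) (k n : ℤ) :
    (q ^ k) ^ (v + 1) * weightedSeq q v (fun t ↦ f (q ^ k * t)) n = weightedSeq q v f (k + n) := by
  rw [weightedSeq, weightedSeq, zpow_add₀ hq0.ne', Real.mul_rpow (by positivity) (by positivity),
    mul_assoc]

theorem memL2_iff_memℓp (hq0 : 0 < q) (f : ℝ → ℝ) :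
    memL2 q v f ↔ Memℓp (weightedSeq q v f) 2 := by
  rw [memL2, memℓp_gen_iff (by simp)]
  refine summable_congr fun n ↦ ?_
  rw [mul_assoc, pow_two, zpow_mul_mul_rpow_eq_weightedSeq_mul hq0]
  simp [← pow_two]

theorem exists_coe_eq_weightedSeq {f : ℝ → ℝ} (hq0 : 0 < q) (hf : memL2 q v f) :
    ∃ g : ℓ²(ℤ, ℝ), ⇑g = weightedSeq q v f :=
  ⟨⟨_, (memL2_iff_memℓp hq0 f).1 hf⟩, rfl⟩

theorem qInner_eq_tsum (hq0 : 0 < q) (f g : ℝ → ℝ) :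
    qInner q v f g = (1 - q) * ∑' n, weightedSeq q v f n * weightedSeq q v g n :=
  congr_arg _ (tsum_congr (zpow_mul_mul_rpow_eq_weightedSeq_mul hq0 f g))

theorem qInt0_zpow_eq_tsum_indicator (hq0 : q ≠ 0) (n₀ : ℤ) (F : ℝ → ℝ) :
    qInt0 q (q ^ n₀) F = (1 - q) * ∑' n, (Set.Ici n₀).indicator (fun n ↦ q ^ n * F (q ^ n)) n := by
  have hinj : Function.Injective fun n : ℕ ↦ n₀ + n := fun m n h ↦ by simpa using h
  rw [qInt0, mul_assoc, ← tsum_mul_left, ← hinj.tsum_eq]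
  · refine congr_arg _ (tsum_congr fun n ↦ ?_)
    rw [Set.indicator_of_mem (by simp), zpow_add₀ hq0, zpow_natCast, mul_assoc]
  · refine (Set.support_indicator_subset).trans fun n hn ↦ ⟨(n - n₀).toNat, ?_⟩
    grind

theorem qIntTail_eq_tsum_indicator (q : ℝ) (n₀ : ℤ) (F : ℝ → ℝ) :
    qIntTail q n₀ F = (1 - q) * ∑' n, (Set.Iio n₀).indicator (fun n ↦ q ^ n * F (q ^ n)) n := by
  have hinj : Function.Injective fun n : ℕ ↦ n₀ - 1 - n := fun m n h ↦ by simpa using h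
  rw [qIntTail, ← hinj.tsum_eq]
  · refine congr_arg _ (tsum_congr fun n ↦ ?_)
    rw [Set.indicator_of_mem (by grind)]
  · refine (Set.support_indicator_subset).trans fun n hn ↦ ⟨(n₀ - 1 - n).toNat, ?_⟩
    grind

theorem tendsto_qIntTail_neg (q : ℝ) (F : ℝ → ℝ) :
    Tendsto (fun m : ℕ ↦ qIntTail q (-m) F) atTop (𝓝 0) := by
  have htail := (tendsto_sum_nat_add fun n : ℕ ↦ q ^ (-1 - n : ℤ) * F (q ^ (-1 - n : ℤ))).const_mul
    (1 - q)
  rw [mul_zero] at htail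
  refine htail.congr fun m ↦ ?_
  have hexp (n : ℕ) : (-1 - (n + m : ℕ) : ℤ) = -m - 1 - n := by lia
  simp only [hexp, qIntTail]

end WeightedSequences

section BesselHankel

variable {q v : ℝ}

/-- The `q`-Bessel transform `Fqv` transported to `ℓ²(ℤ)` by `weightedSeq`. -/
def besselHankel (q v : ℝ) : ℓ²(ℤ, ℝ) →L[ℝ] ℓ²(ℤ, ℝ) := eulerHankel (q ^ 2) (q ^ (v + 1))

theorem abs_sq_lt_one (hq0 : 0 < q) (hq1 : q < 1) : |q ^ 2| < 1 := by
  rw [abs_of_nonneg (by positivity)]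
  exact pow_lt_one₀ hq0.le hq1 two_ne_zero

theorem abs_rpow_lt_one {r : ℝ} (hq0 : 0 < q) (hq1 : q < 1) (hr : 0 < r) : |q ^ r| < 1 := by
  rw [abs_of_nonneg (by positivity)]
  exact Real.rpow_lt_one hq0.le hq1 hr

theorem besselHankel_single_apply (hq0 : 0 < q) (hq1 : q < 1) (hv : -1 < v) (n m : ℤ) :
    besselHankel q v (lp.single 2 n 1) m =
      (1 - q) * cqv q v * weightedSeq q v (jvR v q) (m + n) := by
  have hb : q ^ (2 * v + 2) = (q ^ (v + 1)) ^ 2 := rpow_two_mul_add_two hq0.le v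
  have hp := abs_sq_lt_one hq0 hq1
  have hpoch (i : ℕ) : qPoch (q ^ (2 * v + 2)) (q ^ 2) i ≠ 0 :=
    qPoch_ne_zero (abs_rpow_lt_one hq0 hq1 (by linarith)) hp i
  have hx : (q ^ 2) ^ (m + n + 1) = q ^ 2 * (q ^ (m + n)) ^ 2 := by
    rw [zpow_add_one₀ (by positivity), mul_comm, ← zpow_natCast, ← zpow_natCast, zpow_comm]
  have hw : (q ^ (v + 1)) ^ (m + n) = (q ^ (m + n)) ^ (v + 1) := Real.rpow_zpow_comm hq0.le _ _
  rw [besselHankel, eulerHankel_single_apply (by positivity) hp (by positivity)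
    (abs_rpow_lt_one hq0 hq1 (by linarith)), ← hb, hx, hw,
    ← qPochInf_mul_tsum_eulerCoeff_div_qPoch (by positivity) hp hpoch,
    ← jvR_eq_tsum_eulerCoeff, cqv, weightedSeq]
  field_simp [sub_ne_zero.2 hq1.ne']

theorem adjoint_besselHankel (hq0 : 0 < q) (hq1 : q < 1) (hv : -1 < v) :
    ContinuousLinearMap.adjoint (besselHankel q v) = besselHankel q v :=
  adjoint_eq_self_of_conj_apply_single fun i j ↦ by
    rw [conj_trivial, besselHankel_single_apply hq0 hq1 hv, besselHankel_single_apply hq0 hq1 hv,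
      add_comm]

theorem besselHankel_besselHankel (hq0 : 0 < q) (hq1 : q < 1) (hv : -1 < v) (g : ℓ²(ℤ, ℝ)) :
    besselHankel q v (besselHankel q v g) = g :=
  DFunLike.congr_fun (eulerHankel_mul_self (by positivity) (abs_sq_lt_one hq0 hq1)
    (abs_rpow_lt_one hq0 hq1 (by linarith))) g

theorem inner_besselHankel_left (hq0 : 0 < q) (hq1 : q < 1) (hv : -1 < v) (g h : ℓ²(ℤ, ℝ)) :
    inner ℝ (besselHankel q v g) h = inner ℝ g (besselHankel q v h) := by
  rw [← ContinuousLinearMap.adjoint_inner_left, adjoint_besselHankel hq0 hq1 hv]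

theorem norm_besselHankel (hq0 : 0 < q) (hq1 : q < 1) (hv : -1 < v) (g : ℓ²(ℤ, ℝ)) :
    ‖besselHankel q v g‖ = ‖g‖ := by
  rw [← sq_eq_sq₀ (norm_nonneg _) (norm_nonneg _), ← real_inner_self_eq_norm_sq,
    ← real_inner_self_eq_norm_sq, inner_besselHankel_left hq0 hq1 hv,
    besselHankel_besselHankel hq0 hq1 hv]

theorem besselHankel_apply_eq_tsum (hq0 : 0 < q) (hq1 : q < 1) (hv : -1 < v) (g : ℓ²(ℤ, ℝ))
    (k : ℤ) : besselHankel q v g k = ∑' n, g n * besselHankel q v (lp.single 2 k 1) n := by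
  rw [lp_apply_eq_inner, ← inner_besselHankel_left hq0 hq1 hv, lp.inner_eq_tsum]
  rfl

theorem sq_cqv_mul_qIntInf_jvR (hq0 : 0 < q) (hq1 : q < 1) (hv : -1 < v) :
    cqv q v ^ 2 * qIntInf q (fun t ↦ jvR v q t ^ 2 * t ^ (2 * v + 1)) = (1 - q)⁻¹ := by
  have hone : besselHankel q v (besselHankel q v (lp.single 2 0 1)) 0 = 1 := by
    rw [besselHankel_besselHankel hq0 hq1 hv, lp.single_apply_self]
  rw [besselHankel_apply_eq_tsum hq0 hq1 hv] at hone
  simp only [besselHankel_single_apply hq0 hq1 hv, add_zero] at hone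
  refine eq_inv_of_mul_eq_one_left (Eq.trans ?_ hone)
  rw [qIntInf, mul_comm, ← mul_assoc, ← mul_assoc, ← tsum_mul_left]
  refine tsum_congr fun n ↦ ?_
  rw [pow_two (jvR v q _), zpow_mul_mul_rpow_eq_weightedSeq_mul hq0]
  ring

end BesselHankel

section Truncation

variable {q v : ℝ} {f : ℝ → ℝ} {g : ℓ²(ℤ, ℝ)}

theorem coe_besselHankel (hq0 : 0 < q) (hq1 : q < 1) (hv : -1 < v) (hg : ⇑g = weightedSeq q v f) :
    ⇑(besselHankel q v g) = weightedSeq q v (Fqv q v f) := by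
  funext k
  change _ = _ * (cqv q v * qInner q v f fun t ↦ jvR v q (q ^ k * t))
  rw [besselHankel_apply_eq_tsum hq0 hq1 hv, hg, qInner_eq_tsum hq0, ← tsum_mul_left,
    ← tsum_mul_left, ← tsum_mul_left]
  refine tsum_congr fun n ↦ ?_
  rw [besselHankel_single_apply hq0 hq1 hv, add_comm n,
    ← rpow_mul_weightedSeq_comp_mul hq0 (jvR v q)]
  ring

variable (q v) in
/-- The operator on `ℓ²(ℤ)` which truncates the `q`-Bessel transform to `[0, q ^ n₀]`. -/
def besselTruncation (n₀ : ℤ) : ℓ²(ℤ, ℝ) →L[ℝ] ℓ²(ℤ, ℝ) :=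
  besselHankel q v * lpIndicator ℝ (Set.Ici n₀) * besselHankel q v

theorem besselTruncation_single_apply (hq0 : 0 < q) (hq1 : q < 1) (hv : -1 < v) (n₀ k n : ℤ) :
    besselTruncation q v n₀ (lp.single 2 k 1) n =
      (1 - q) * ((q ^ k) ^ (v + 1) * weightedSeq q v (kker q v (q ^ n₀) (q ^ k)) n) := by
  rw [besselTruncation, mul_apply_eq_comp, mul_apply_eq_comp, besselHankel_apply_eq_tsum hq0 hq1 hv,
    weightedSeq, kker, qInt0_zpow_eq_tsum_indicator hq0.ne']
  simp only [← tsum_mul_left, coe_lpIndicator]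
  refine tsum_congr fun m ↦ ?_
  by_cases hm : m ∈ Set.Ici n₀
  · rw [Set.indicator_of_mem hm, Set.indicator_of_mem hm, besselHankel_single_apply hq0 hq1 hv,
      besselHankel_single_apply hq0 hq1 hv, add_comm m k, add_comm m n,
      ← rpow_mul_weightedSeq_comp_mul hq0, ← rpow_mul_weightedSeq_comp_mul hq0,
      zpow_mul_mul_rpow_eq_weightedSeq_mul hq0 (fun t ↦ jvR v q (q ^ k * t))
        (fun t ↦ jvR v q (q ^ n * t))]
    ring
  · simp only [Set.indicator_of_notMem hm, zero_mul, mul_zero]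

theorem adjoint_besselTruncation (hq0 : 0 < q) (hq1 : q < 1) (hv : -1 < v) (n₀ : ℤ) :
    ContinuousLinearMap.adjoint (besselTruncation q v n₀) = besselTruncation q v n₀ := by
  simp only [besselTruncation, ← ContinuousLinearMap.star_eq_adjoint, star_mul]
  simp only [ContinuousLinearMap.star_eq_adjoint, adjoint_lpIndicator,
    adjoint_besselHankel hq0 hq1 hv, mul_assoc]

theorem coe_besselTruncation (hq0 : 0 < q) (hq1 : q < 1) (hv : -1 < v) (n₀ : ℤ)
    (hg : ⇑g = weightedSeq q v f) :
    ⇑(besselTruncation q v n₀ g) = weightedSeq q v (fTrunc q v n₀ f) := by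
  funext k
  rw [lp_apply_eq_inner, ← ContinuousLinearMap.adjoint_inner_left,
    adjoint_besselTruncation hq0 hq1 hv, lp.inner_eq_tsum, weightedSeq, fTrunc, qInner_eq_tsum hq0,
    ← tsum_mul_left, ← tsum_mul_left]
  refine tsum_congr fun n ↦ ?_
  rw [besselTruncation_single_apply hq0 hq1 hv, hg, RCLike.inner_apply, conj_trivial]
  ring

theorem sub_besselTruncation (hq0 : 0 < q) (hq1 : q < 1) (hv : -1 < v) (n₀ : ℤ) (g : ℓ²(ℤ, ℝ)) :
    g - besselTruncation q v n₀ g =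
      besselHankel q v (lpIndicator ℝ (Set.Iio n₀) (besselHankel q v g)) := by
  rw [← Set.compl_Ici, ← sub_lpIndicator, map_sub, besselHankel_besselHankel hq0 hq1 hv]
  rfl

theorem one_sub_mul_norm_sq_lpIndicator_Iio (hq0 : 0 < q) (n₀ : ℤ) (hg : ⇑g = weightedSeq q v f) :
    (1 - q) * ‖lpIndicator ℝ (Set.Iio n₀) g‖ ^ 2 =
      qIntTail q n₀ fun t ↦ f t ^ 2 * t ^ (2 * v + 1) := by
  rw [← real_inner_self_eq_norm_sq, lp.inner_eq_tsum, qIntTail_eq_tsum_indicator]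
  refine congr_arg _ (tsum_congr fun n ↦ ?_)
  rw [coe_lpIndicator, hg, RCLike.inner_apply, conj_trivial]
  by_cases hn : n ∈ Set.Iio n₀
  · simp only [Set.indicator_of_mem hn, pow_two, zpow_mul_mul_rpow_eq_weightedSeq_mul hq0]
  · simp only [Set.indicator_of_notMem hn, mul_zero]

theorem one_sub_mul_norm_sq_sub_besselTruncation (hq0 : 0 < q) (hq1 : q < 1) (hv : -1 < v) (n₀ : ℤ)
    (hg : ⇑g = weightedSeq q v f) :
    (1 - q) * ‖g - besselTruncation q v n₀ g‖ ^ 2 =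
      qIntTail q n₀ fun t ↦ Fqv q v f t ^ 2 * t ^ (2 * v + 1) := by
  rw [sub_besselTruncation hq0 hq1 hv, norm_besselHankel hq0 hq1 hv,
    one_sub_mul_norm_sq_lpIndicator_Iio hq0 n₀ (coe_besselHankel hq0 hq1 hv hg)]

theorem rpow_mul_sq_le_norm_sq (hq0 : 0 < q) (hg : ⇑g = weightedSeq q v f) (k : ℤ) :
    (q ^ k) ^ (2 * v + 2) * f (q ^ k) ^ 2 ≤ ‖g‖ ^ 2 := by
  have hexp : (q ^ k) ^ (2 * v + 2) = ((q ^ k) ^ (v + 1)) ^ 2 :=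
    rpow_two_mul_add_two (by positivity) v
  have hle := pow_le_pow_left₀ (norm_nonneg _) (lp.norm_apply_le_norm two_ne_zero g k) 2
  rwa [hg, weightedSeq, Real.norm_eq_abs, sq_abs, mul_pow, ← hexp] at hle

theorem memL2_fTrunc (hq0 : 0 < q) (hq1 : q < 1) (hv : -1 < v) (n₀ : ℤ) (hf : memL2 q v f) :
    memL2 q v (fTrunc q v n₀ f) := by
  obtain ⟨g, hg⟩ := exists_coe_eq_weightedSeq hq0 hf
  rw [memL2_iff_memℓp hq0, ← coe_besselTruncation hq0 hq1 hv n₀ hg]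
  exact lp.memℓp _

theorem Fqv_fTrunc_eq_zero (hq0 : 0 < q) (hq1 : q < 1) (hv : -1 < v) (hf : memL2 q v f) {n₀ m : ℤ}
    (hm : m < n₀) : Fqv q v (fTrunc q v n₀ f) (q ^ m) = 0 := by
  obtain ⟨g, hg⟩ := exists_coe_eq_weightedSeq hq0 hf
  have hH := congr_fun (coe_besselHankel hq0 hq1 hv (coe_besselTruncation hq0 hq1 hv n₀ hg)) m
  rw [besselTruncation, mul_apply_eq_comp, mul_apply_eq_comp, besselHankel_besselHankel hq0 hq1 hv,
    coe_lpIndicator, Set.indicator_of_notMem (by simpa using hm), weightedSeq] at hH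
  exact (mul_eq_zero.1 hH.symm).resolve_left (by positivity)

theorem sq_sub_fTrunc_le (hq0 : 0 < q) (hq1 : q < 1) (hv : -1 < v) (hf : memL2 q v f) (n₀ k : ℤ) :
    (f (q ^ k) - fTrunc q v n₀ f (q ^ k)) ^ 2 ≤
      cqv q v ^ 2 * qIntInf q (fun t ↦ jvR v q t ^ 2 * t ^ (2 * v + 1)) / (q ^ k) ^ (2 * v + 2) *
        qIntTail q n₀ (fun t ↦ Fqv q v f t ^ 2 * t ^ (2 * v + 1)) := by
  obtain ⟨g, hg⟩ := exists_coe_eq_weightedSeq hq0 hf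
  have herr : ⇑(g - besselTruncation q v n₀ g) = weightedSeq q v (f - fTrunc q v n₀ f) := by
    rw [lp.coeFn_sub, hg, coe_besselTruncation hq0 hq1 hv n₀ hg, weightedSeq_sub]
  have hx : 0 < (q ^ k) ^ (2 * v + 2) := by positivity
  rw [sq_cqv_mul_qIntInf_jvR hq0 hq1 hv,
    ← one_sub_mul_norm_sq_sub_besselTruncation hq0 hq1 hv n₀ hg,
    div_mul_eq_mul_div, inv_mul_cancel_left₀ (sub_pos.2 hq1).ne', le_div_iff₀' hx]
  exact rpow_mul_sq_le_norm_sq hq0 herr k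

theorem tendstoUniformlyOn_fTrunc (hq0 : 0 < q) (hq1 : q < 1) (hv : -1 < v) (hf : memL2 q v f)
    {δ : ℝ} (hδ : 0 < δ) :
    TendstoUniformlyOn (fun m : ℕ ↦ fTrunc q v (-m) f) f atTop
      {x | δ < x ∧ ∃ k : ℤ, q ^ k = x} := by
  have hlim := ((tendsto_qIntTail_neg q fun t ↦ Fqv q v f t ^ 2 * t ^ (2 * v + 1)).const_mul
    (cqv q v ^ 2 * qIntInf q (fun t ↦ jvR v q t ^ 2 * t ^ (2 * v + 1)) / δ ^ (2 * v + 2)))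
  rw [mul_zero] at hlim
  rw [Metric.tendstoUniformlyOn_iff]
  intro ε hε
  filter_upwards [hlim.eventually_lt_const (sq_pos_of_pos hε)] with m hm
  rintro _ ⟨hδk, k, rfl⟩
  rw [Real.dist_eq]
  have hle := sq_sub_fTrunc_le hq0 hq1 hv hf (-m) k
  refine abs_lt_of_sq_lt_sq (lt_of_le_of_lt (hle.trans ?_) hm) hε.le
  gcongr
  · obtain ⟨g, hg⟩ := exists_coe_eq_weightedSeq hq0 hf
    rw [← one_sub_mul_norm_sq_sub_besselTruncation hq0 hq1 hv (-m) hg]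
    exact mul_nonneg (sub_pos.2 hq1).le (sq_nonneg _)
  · rw [sq_cqv_mul_qIntInf_jvR hq0 hq1 hv]
    exact inv_nonneg.2 (sub_pos.2 hq1).le
  · linarith

end Truncation

end

/-- `f_a ∈ PW_{q,a}^v`, the pointwise error bound, and uniform
convergence `f_a → f` on `{x ∈ ℝ_q⁺ : x > δ}` as `a → ∞` along `q^{-ℤ}`. -/
theorem bandlimited_approximation (q v : ℝ) (hq0 : 0 < q) (hq1 : q < 1) (hv : -1 < v)
    (f : ℝ → ℝ) (hf : memL2 q v f) :
    (∀ n₀ : ℤ, memL2 q v (fTrunc q v n₀ f) ∧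
      ∀ m : ℤ, (q : ℝ) ^ n₀ < (q : ℝ) ^ m → Fqv q v (fTrunc q v n₀ f) ((q : ℝ) ^ m) = 0) ∧
    (∀ n₀ k : ℤ,
      (f ((q : ℝ) ^ k) - fTrunc q v n₀ f ((q : ℝ) ^ k)) ^ 2 ≤
        cqv q v ^ 2 * qIntInf q (fun t => (jvR v q t) ^ 2 * t ^ (2 * v + 1 : ℝ)) /
            ((q : ℝ) ^ k) ^ (2 * v + 2 : ℝ) *
          qIntTail q n₀ (fun t => (Fqv q v f t) ^ 2 * t ^ (2 * v + 1 : ℝ))) ∧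
    (∀ δ > (0 : ℝ), ∀ ε > (0 : ℝ), ∃ N : ℕ, ∀ m : ℕ, N ≤ m → ∀ k : ℤ,
      δ < (q : ℝ) ^ k →
        |f ((q : ℝ) ^ k) - fTrunc q v (-(m : ℤ)) f ((q : ℝ) ^ k)| < ε) := by
  refine ⟨fun n₀ ↦ ⟨memL2_fTrunc hq0 hq1 hv n₀ hf, fun m hm ↦ ?_⟩,
    sq_sub_fTrunc_le hq0 hq1 hv hf, fun δ hδ ε hε ↦ ?_⟩
  · exact Fqv_fTrunc_eq_zero hq0 hq1 hv hf ((zpow_lt_zpow_iff_right_of_lt_one₀ hq0 hq1).1 hm)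
  · have hunif := Metric.tendstoUniformlyOn_iff.1 (tendstoUniformlyOn_fTrunc hq0 hq1 hv hf hδ) ε hε
    obtain ⟨N, hN⟩ := Filter.eventually_atTop.1 hunif
    exact ⟨N, fun m hm k hk ↦ hN m hm _ ⟨hk, k, rfl⟩⟩
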